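/- For every positive integer m and every normalized U(1)-valued 3-cocycle ω on ℤ/mℤ, there exists an ω-anomalous action of ℤ/mℤ on C(S¹): that is, there exist an action of ℤ/mℤ on the circle S¹ = U(1) by homeomorphisms g ↦ φ_g, and continuous functions μ(g,h) : S¹ → U(1) for g,h ∈ ℤ/mℤ with μ(g,h) constantly 1 whenever g or h is zero, such that ω(g,h,k)·μ(g+h,k)(z)·μ(g,h)(z) = μ(g,h+k)(z)·μ(h,k)(φ_g⁻¹(z)) for all g,h,k ∈ ℤ/mℤ and all z ∈ S¹. -/

import Mathlib

/-!
Regard `C(S¹, U(1))` as a `ℤ/m`-module through a rotation action on `S¹`. An `ω`-anomalous action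
over these rotations is a `2`-cochain with coboundary `ω`, so we must show that `ω` becomes trivial
in `H³(ℤ/m, C(S¹, U(1)))`. A `3`-cocycle on `ℤ/m` is determined by `ω 1`, and prescribing the
coboundary of `μ` there is a first-order recursion for `g ↦ μ g k`. This recursion closes up after
`m` steps as soon as the `1`-cocycle `k ↦ ∏ j, ω 1 j k` is the coboundary of some `u` (this is the
periodicity `H³ ≅ H¹` of cyclic groups). For constant `ω` that `1`-cocycle is a character of `ℤ/m`,
hence of the form `k ↦ e(k/m) ^ p`, and `u z = z ^ (-p)` works.
-/

/-- `ρ` makes the abelian group `M` a `G`-module, both written additively; `IsCocycle₃ ρ ω` says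
that the inhomogeneous `3`-cochain `ω` on `G` with coefficients in `M` is a cocycle. -/
def IsCocycle₃ {G M : Type*} [AddMonoid G] [AddCommGroup M] (ρ : AddChar G (AddMonoid.End M))
    (ω : G → G → G → M) : Prop :=
  ∀ g₁ g₂ g₃ g₄,
    ω (g₁ + g₂) g₃ g₄ + ω g₁ g₂ (g₃ + g₄) =
      ρ g₁ (ω g₂ g₃ g₄) + ω g₁ (g₂ + g₃) g₄ + ω g₁ g₂ g₃

/-- The inhomogeneous coboundary of a `2`-cochain with coefficients in the `G`-module `(M, ρ)`;
the anomalous cocycle equation says that the coboundary of `μ` is `ω`. -/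
def coboundary₂ {G M : Type*} [AddMonoid G] [AddCommGroup M] (ρ : AddChar G (AddMonoid.End M))
    (μ : G → G → M) (g h k : G) : M :=
  ρ g (μ h k) - μ (g + h) k + μ g (h + k) - μ g h

section Cochains

variable {G M : Type*} [AddMonoid G] [AddCommGroup M] {ρ : AddChar G (AddMonoid.End M)}

theorem isCocycle₃_coboundary₂ (μ : G → G → M) : IsCocycle₃ ρ (coboundary₂ ρ μ) := by
  intro g₁ g₂ g₃ g₄
  simp only [coboundary₂, map_add, map_sub, AddChar.map_add_eq_mul, AddMonoid.End.coe_mul,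
    Function.comp_apply, add_assoc]
  abel

theorem IsCocycle₃.apply_add_congr {ω ω' : G → G → G → M} (hω : IsCocycle₃ ρ ω)
    (hω' : IsCocycle₃ ρ ω') {a b : G} (ha : ω a = ω' a) (hb : ω b = ω' b) :
    ω (a + b) = ω' (a + b) := by
  funext h k
  rw [eq_sub_of_add_eq (hω a b h k), eq_sub_of_add_eq (hω' a b h k), ha, hb]

theorem coboundary₂_zero_zero {μ : G → G → M} (hμ : μ 0 0 = 0) (g : G) :
    coboundary₂ ρ μ g 0 0 = -μ g 0 := by
  simp [coboundary₂, hμ]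

end Cochains

section Cyclic

variable {m : ℕ} [NeZero m] {M : Type*} [AddCommGroup M] {ρ : AddChar (ZMod m) (AddMonoid.End M)}

theorem IsCocycle₃.ext_one {ω ω' : ZMod m → ZMod m → ZMod m → M} (hω : IsCocycle₃ ρ ω)
    (hω' : IsCocycle₃ ρ ω') (h : ω 1 = ω' 1) : ω = ω' := by
  have apply_succ (n : ℕ) : ω (n + 1) = ω' (n + 1) := by
    induction n with
    | zero => simpa using h
    | succ n ih => exact_mod_cast hω.apply_add_congr hω' ih h
  funext g
  simpa using apply_succ (g - 1).val

theorem sum_range_natCast_zmod {N : Type*} [AddCommMonoid N] (f : ZMod m → N) :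
    ∑ j ∈ Finset.range m, f j = ∑ j, f j :=
  Finset.sum_nbij' Nat.cast ZMod.val (by simp) (by simp [ZMod.val_lt])
    (fun _ hj ↦ ZMod.val_cast_of_lt (Finset.mem_range.mp hj)) (by simp) (by simp)

theorem exists_eq_apply_add_of_sum_eq_zero (d : ZMod m → M) (hd : ∑ j, ρ (-1 - j) (d j) = 0) :
    ∃ f : ZMod m → M, f 0 = 0 ∧ ∀ g, f (g + 1) = ρ 1 (f g) + d g := by
  let F (n : ℕ) : M := ∑ j ∈ Finset.range n, ρ (n - 1 - j) (d j)
  have F_succ (n : ℕ) : F (n + 1) = ρ 1 (F n) + d n := by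
    have ρ_succ (j : ℕ) : ρ ((n + 1 : ℕ) - 1 - j) (d j) = ρ 1 (ρ (n - 1 - j) (d j)) := by
      rw [← Function.comp_apply (f := ρ 1), ← AddMonoid.End.coe_mul, ← AddChar.map_add_eq_mul]
      congr 2
      push_cast
      ring
    simp [F, Finset.sum_range_succ, map_sum, ← ρ_succ]
  have F_card : F m = 0 := by
    simpa [F] using (sum_range_natCast_zmod fun j ↦ ρ (-1 - j) (d j)).trans hd
  have F_periodic : Function.Periodic F m := by
    intro n
    induction n with
    | zero => simpa [F] using F_card
    | succ n ih =>
      rw [add_right_comm, F_succ, ih, F_succ, Nat.cast_add, ZMod.natCast_self, add_zero]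
  have F_val (n : ℕ) : F (n : ZMod m).val = F n := by
    rw [ZMod.val_natCast, F_periodic.map_mod_nat]
  refine ⟨fun g ↦ F g.val, by simp [F], fun g ↦ ?_⟩
  obtain ⟨n, rfl⟩ := ZMod.natCast_zmod_surjective g
  simpa only [F_val, Nat.cast_succ] using (F_val (n + 1)).trans (F_succ n)

theorem exists_normalized_coboundary₂_eq {ω : ZMod m → ZMod m → ZMod m → M}
    (hω : IsCocycle₃ ρ ω) (hω₀ : ∀ g k, ω g 0 k = 0) (u : M)
    (hu : ∀ k, ρ k u = u + ∑ j, ρ (-1 - j) (ω 1 j k)) :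
    ∃ μ : ZMod m → ZMod m → M,
      (∀ k, μ 0 k = 0) ∧ (∀ g, μ g 0 = 0) ∧ coboundary₂ ρ μ = ω := by
  -- Up to the normalization at `0`, the cochain `c` is `μ 1`; placing `u` at the single point `-1`
  -- makes the sum closing up the recursion collapse to `ρ k u - u - ∑ j, ρ (-1 - j) (ω 1 j k)`.
  let c : ZMod m → M := Pi.single (-1) u
  have sum_shift (k : ZMod m) : ∑ j, ρ (-1 - j) (c (j + k)) = ρ k u := by
    rw [Fintype.sum_eq_single (-1 - k)]
    · simp [c]
    · intro j hj
      simp [c, Pi.single_eq_of_ne (mt eq_sub_of_add_eq hj)]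
  have sum_eq_zero (k : ZMod m) : ∑ j, ρ (-1 - j) (c (j + k) - c j - ω 1 j k) = 0 := by
    have sum_c : ∑ j, ρ (-1 - j) (c j) = u := by simpa using sum_shift 0
    simp only [map_sub, Finset.sum_sub_distrib, sum_shift, sum_c, hu]
    abel
  choose f f_zero f_succ using fun k ↦ exists_eq_apply_add_of_sum_eq_zero _ (sum_eq_zero k)
  let μ (g k : ZMod m) : M := f k g
  have coboundary_eq : coboundary₂ ρ μ = ω := by
    refine (isCocycle₃_coboundary₂ μ).ext_one hω ?_
    funext h k
    have f_one (k : ZMod m) : f k 1 = c k - c 0 := by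
      simpa [f_zero, hω₀] using f_succ k 0
    simp only [coboundary₂, μ, f_one, add_comm 1 h, f_succ]
    abel
  refine ⟨μ, f_zero, fun g ↦ ?_, coboundary_eq⟩
  rw [← neg_eq_zero, ← coboundary₂_zero_zero (ρ := ρ) (μ := μ) (f_zero 0), coboundary_eq, hω₀]

end Cyclic

section Actions

variable {G X A : Type*} [AddMonoid G] [TopologicalSpace X] [TopologicalSpace A]

/-- An action `φ` of `G` on `X` by homeomorphisms makes `C(X, A)`, written additively, a
`G`-module, in which `g` acts by `f ↦ f ∘ (φ g)⁻¹`. -/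
def pullback [CommGroup A] [IsTopologicalGroup A] (φ : AddChar G (X ≃ₜ X)) :
    AddChar G (AddMonoid.End (Additive C(X, A))) where
  toFun g := (ContinuousMap.compMonoidHom' ((φ g).symm : C(X, X))).toAdditive
  map_zero_eq_one' := by rw [AddChar.map_zero_eq_one]; rfl
  map_add_eq_mul' g h := by rw [AddChar.map_add_eq_mul]; rfl

theorem toMul_pullback_apply [CommGroup A] [IsTopologicalGroup A] (φ : AddChar G (X ≃ₜ X)) (g : G)
    (f : Additive C(X, A)) (x : X) :
    (pullback φ g f).toMul x = f.toMul ((φ g).symm x) :=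
  rfl

/-- The action of `G` on a topological group `A` by left translations through a character. -/
def translation [Group A] [SeparatelyContinuousMul A] (χ : AddChar G A) : AddChar G (A ≃ₜ A) where
  toFun g := Homeomorph.mulLeft (χ g)
  map_zero_eq_one' := by ext; simp
  map_add_eq_mul' g h := by ext; simp [AddChar.map_add_eq_mul, mul_assoc]

theorem translation_symm_apply [Group A] [SeparatelyContinuousMul A] (χ : AddChar G A) (g : G)
    (a : A) : (translation χ g).symm a = (χ g)⁻¹ * a :=
  rfl

theorem exists_anomalous_phases [CommGroup A] [IsTopologicalGroup A] {m : ℕ} [NeZero m]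
    (φ : AddChar (ZMod m) (X ≃ₜ X)) {ω : ZMod m → ZMod m → ZMod m → A}
    (hω₀ : ∀ g k, ω g 0 k = 1)
    (hω : ∀ g₁ g₂ g₃ g₄,
      ω (g₁ + g₂) g₃ g₄ * ω g₁ g₂ (g₃ + g₄) = ω g₂ g₃ g₄ * ω g₁ (g₂ + g₃) g₄ * ω g₁ g₂ g₃)
    (u : C(X, A)) (hu : ∀ k x, u ((φ k).symm x) = u x * ∏ j, ω 1 j k) :
    ∃ μ : ZMod m → ZMod m → C(X, A), (∀ k, μ 0 k = 1) ∧ (∀ g, μ g 0 = 1) ∧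
      ∀ g h k x,
        ω g h k * μ (g + h) k x * μ g h x = μ g (h + k) x * μ h k ((φ g).symm x) := by
  let const (a : A) : Additive C(X, A) := .ofMul (ContinuousMap.const X a)
  let Ω (g h k : ZMod m) : Additive C(X, A) := const (ω g h k)
  have pullback_Ω (g g₁ g₂ g₃ : ZMod m) : pullback φ g (Ω g₁ g₂ g₃) = Ω g₁ g₂ g₃ := rfl
  have isCocycle_Ω : IsCocycle₃ (pullback φ) Ω := by
    intro g₁ g₂ g₃ g₄
    rw [pullback_Ω]
    exact congrArg const (hω g₁ g₂ g₃ g₄)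
  have pullback_u (k : ZMod m) :
      pullback φ k (.ofMul u) = .ofMul u + ∑ j, pullback φ (-1 - j) (Ω 1 j k) := by
    refine Additive.toMul.injective (ContinuousMap.ext fun x ↦ ?_)
    simpa [pullback_Ω, Ω, const, toMul_pullback_apply] using hu k x
  obtain ⟨μ, μ_zero_left, μ_zero_right, coboundary_μ⟩ :=
    exists_normalized_coboundary₂_eq isCocycle_Ω (fun g k ↦ congrArg const (hω₀ g k)) _ pullback_u
  refine ⟨fun g h ↦ (μ g h).toMul, μ_zero_left, μ_zero_right, fun g h k x ↦ ?_⟩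
  have anomaly_eq : Ω g h k + μ (g + h) k + μ g h = μ g (h + k) + pullback φ g (μ h k) := by
    rw [← coboundary_μ, coboundary₂]
    abel
  exact congrArg (fun f : Additive C(X, A) ↦ f.toMul x) anomaly_eq

end Actions

section Characters

theorem prod_slant_add {G A : Type*} [AddGroup G] [Fintype G] [CommGroup A] {ω : G → G → G → A}
    (hω : ∀ g₁ g₂ g₃ g₄,
      ω (g₁ + g₂) g₃ g₄ * ω g₁ g₂ (g₃ + g₄) = ω g₂ g₃ g₄ * ω g₁ (g₂ + g₃) g₄ * ω g₁ g₂ g₃)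
    (g k l : G) : ∏ j, ω g j (k + l) = (∏ j, ω g j k) * ∏ j, ω g j l := by
  have prod_cocycle : (∏ j, ω (g + j) k l) * ∏ j, ω g j (k + l) =
      (∏ j, ω j k l) * (∏ j, ω g (j + k) l) * ∏ j, ω g j k := by
    simp only [← Finset.prod_mul_distrib, hω]
  have prod_left : ∏ j, ω (g + j) k l = ∏ j, ω j k l :=
    Equiv.prod_comp (Equiv.addLeft g) (ω · k l)
  have prod_right : ∏ j, ω g (j + k) l = ∏ j, ω g j l :=
    Equiv.prod_comp (Equiv.addRight k) (ω g · l)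
  rw [prod_left, prod_right, mul_assoc] at prod_cocycle
  rw [mul_left_cancel prod_cocycle, mul_comm]

theorem exists_eq_toCircle_zpow {m : ℕ} [NeZero m] (χ : AddChar (ZMod m) Circle) :
    ∃ p : ℤ, ∀ k, χ k = ZMod.toCircle k ^ p := by
  obtain ⟨x, hx⟩ := AddChar.zmodAddEquiv.surjective (AddChar.circleEquivComplex χ)
  obtain ⟨p, rfl⟩ := ZMod.intCast_surjective x
  rw [AddChar.zmodAddEquiv_apply] at hx
  refine ⟨p, fun k ↦ ?_⟩
  rw [← AddChar.circleEquivComplex.injective hx, ← AddChar.map_zsmul_eq_zpow, zsmul_eq_mul]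
  rfl

end Characters

/-- Sections 3.1 and 4.3 of the paper.  For every positive integer `m` and
every normalized `U(1)`-valued 3-cocycle `ω` on `ℤ/mℤ`, there is an `ω`-anomalous action of
`ℤ/mℤ` on `C(S¹)`: an action of `ℤ/mℤ` on the circle by homeomorphisms `g ↦ φ g` together with
normalized continuous functions `μ g h : S¹ → U(1)` satisfying the anomalous cocycle
equation. -/
theorem anomalous_action_of_cyclic_on_circle
    (m : ℕ) (hm : 0 < m)
    (ω : ZMod m → ZMod m → ZMod m → Circle)
    (hω_norm : ∀ g h k, g = 0 ∨ h = 0 ∨ k = 0 → ω g h k = 1)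
    (hω_coc : ∀ g₁ g₂ g₃ g₄,
      ω (g₁ + g₂) g₃ g₄ * ω g₁ g₂ (g₃ + g₄)
        = ω g₂ g₃ g₄ * ω g₁ (g₂ + g₃) g₄ * ω g₁ g₂ g₃) :
    ∃ (φ : ZMod m → (Circle ≃ₜ Circle)) (μ : ZMod m → ZMod m → C(Circle, Circle)),
      φ 0 = Homeomorph.refl Circle ∧
      (∀ g h z, φ (g + h) z = φ g (φ h z)) ∧
      (∀ g h, g = 0 ∨ h = 0 → μ g h = 1) ∧
      (∀ g h k z,
        ω g h k * μ (g + h) k z * μ g h z = μ g (h + k) z * μ h k ((φ g).symm z)) := by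
  have : NeZero m := ⟨hm.ne'⟩
  let χ : AddChar (ZMod m) Circle :=
    { toFun k := ∏ j, ω 1 j k
      map_zero_eq_one' := Finset.prod_eq_one fun j _ ↦ hω_norm 1 j 0 (by simp)
      map_add_eq_mul' := prod_slant_add hω_coc 1 }
  obtain ⟨p, hp⟩ := exists_eq_toCircle_zpow χ
  let φ : AddChar (ZMod m) (Circle ≃ₜ Circle) := translation ZMod.toCircle
  let u : C(Circle, Circle) := ContinuousMap.id Circle ^ (-p)
  have u_rotate (k : ZMod m) (z : Circle) : u ((φ k).symm z) = u z * χ k := by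
    simp [u, φ, hp, translation_symm_apply, mul_zpow, mul_comm]
  obtain ⟨μ, μ_zero_left, μ_zero_right, anomaly_eq⟩ :=
    exists_anomalous_phases φ (fun g k ↦ hω_norm g 0 k (by simp)) hω_coc u u_rotate
  refine ⟨φ, μ, φ.map_zero_eq_one, fun g h z ↦ ?_, ?_, anomaly_eq⟩
  · rw [φ.map_add_eq_mul, Homeomorph.mul_apply]
  · rintro g h (rfl | rfl)
    · exact μ_zero_left h
    · exact μ_zero_right g
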